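/- arXiv:1504.05219 — 2 statements merged into one kernel-verified Lean document; each statement's English description precedes it below -/
import Mathlib

section
/- Let α_1, α_2 ≥ 0 with α_1 + α_2 = 1, α_1 > 1/2, α_2 > 0, and let r > 0 be a real number. If (α_1 + α_2·exp(θ))^r is the Laplace transform of a probability measure on ℝ, then r is a natural number. -/
open MeasureTheory Real

open ProbabilityTheory Filter Topology in
/-- Two finite measures whose Laplace transforms agree near `0` are equal. -/
lemma ext_of_local_mgf (μ ν : Measure ℝ) [IsFiniteMeasure μ] [IsFiniteMeasure ν]
    (δ : ℝ) (hδ : 0 < δ)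
    (hμ : ∀ t : ℝ, |t| < δ → Integrable (fun x => Real.exp (t * x)) μ)
    (hν : ∀ t : ℝ, |t| < δ → Integrable (fun x => Real.exp (t * x)) ν)
    (h : ∀ t : ℝ, |t| < δ → ∫ x, Real.exp (t * x) ∂μ = ∫ x, Real.exp (t * x) ∂ν) :
    μ = ν := by
  have sub : ∀ (ρ : Measure ℝ), (∀ t : ℝ, |t| < δ → Integrable (fun x => Real.exp (t * x)) ρ) →
      ∀ t : ℝ, |t| < δ → t ∈ interior (integrableExpSet id ρ) := by
    intro ρ hρ t ht
    refine mem_interior.2 ⟨Set.Ioo (-δ) δ, ?_, isOpen_Ioo, ?_⟩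
    · intro s hs
      exact hρ s (abs_lt.2 hs)
    · exact abs_lt.1 ht
  have hX : AnalyticOnNhd ℂ (complexMGF id μ) {z | z.re ∈ Set.Ioo (-δ) δ} :=
    fun z hz => analyticAt_complexMGF (sub μ hμ _ (abs_lt.2 hz))
  have hY : AnalyticOnNhd ℂ (complexMGF id ν) {z | z.re ∈ Set.Ioo (-δ) δ} :=
    fun z hz => analyticAt_complexMGF (sub ν hν _ (abs_lt.2 hz))
  have key : Set.EqOn (complexMGF id μ) (complexMGF id ν) {z | z.re ∈ Set.Ioo (-δ) δ} := by
    refine AnalyticOnNhd.eqOn_of_preconnected_of_frequently_eq hX hY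
      ((convex_Ioo (-δ) δ).linear_preimage Complex.reLm).isPreconnected
      (z₀ := ((0 : ℝ) : ℂ)) (by simp [hδ]) ?_
    have h_real : ∃ᶠ (x : ℝ) in 𝓝[≠] 0, complexMGF id μ x = complexMGF id ν x := by
      refine Eventually.frequently ?_
      refine Filter.Eventually.filter_mono nhdsWithin_le_nhds ?_
      filter_upwards [Ioo_mem_nhds (neg_lt_zero.2 hδ) hδ] with y hy
      rw [complexMGF_ofReal, complexMGF_ofReal]
      simp only [mgf, id]
      rw [h y (abs_lt.2 hy)]
    rw [frequently_iff_seq_forall] at h_real ⊢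
    obtain ⟨xs, hx_tendsto, hx_eq⟩ := h_real
    refine ⟨fun n ↦ xs n, ?_, fun n ↦ ?_⟩
    · rw [tendsto_nhdsWithin_iff] at hx_tendsto ⊢
      constructor
      · exact (Complex.continuous_ofReal.tendsto 0).comp hx_tendsto.1
      · simpa using hx_tendsto.2
    · simp [hx_eq]
  refine Measure.ext_of_charFun (funext fun t => ?_)
  rw [← complexMGF_id_mul_I, ← complexMGF_id_mul_I]
  exact key (by simp [hδ])

lemma descPochhammer_smeval_eq_prod (n : ℕ) (r : ℝ) :
    (descPochhammer ℤ n).smeval r = ∏ j ∈ Finset.range n, (r - j) := by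
  rw [← descPochhammer_eval_eq_prod_range, ← descPochhammer_map (algebraMap ℤ ℝ),
    Polynomial.eval_map_algebraMap, Polynomial.aeval_eq_smeval]

/-- For a non-natural positive `r`, some generalized binomial coefficient is negative. -/
lemma exists_choose_neg (r : ℝ) (hr : 0 < r) (h : ¬ ∃ n : ℕ, r = n) :
    ∃ k : ℕ, Ring.choose r k < 0 := by
  refine ⟨⌊r⌋₊ + 1 + 1, ?_⟩
  have h1 : (⌊r⌋₊ : ℝ) < r := lt_of_le_of_ne (Nat.floor_le hr.le) (fun e => h ⟨_, e.symm⟩)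
  have h2 : r < ⌊r⌋₊ + 1 := Nat.lt_floor_add_one r
  rw [Ring.choose_eq_smul, descPochhammer_smeval_eq_prod,
    Finset.prod_range_succ, smul_eq_mul]
  refine mul_neg_of_pos_of_neg (by positivity) (mul_neg_of_pos_of_neg ?_ ?_)
  · refine Finset.prod_pos fun j hj => ?_
    have : (j : ℝ) ≤ ⌊r⌋₊ := by exact_mod_cast Nat.lt_succ_iff.1 (Finset.mem_range.1 hj)
    linarith
  · push_cast
    linarith

/-- The discrete measure with weight `(c k)⁺` at `k`. -/
noncomputable def discM (c : ℕ → ℝ) : Measure ℝ :=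
  Measure.sum fun k : ℕ => ENNReal.ofReal (c k) • Measure.dirac (k : ℝ)

lemma discM_singleton (c : ℕ → ℝ) (k : ℕ) : discM c {(k : ℝ)} = ENNReal.ofReal (c k) := by
  rw [discM, Measure.sum_apply _ (measurableSet_singleton _), tsum_eq_single k]
  · simp
  · intro j hj
    simp [hj]

lemma discM_integrable (c : ℕ → ℝ) (t : ℝ) (h : Summable fun k : ℕ => |c k| * Real.exp (t * k)) :
    Integrable (fun x => Real.exp (t * x)) (discM c) := by
  refine integrable_sum_dirac (fun _ => ENNReal.ofReal_ne_top) ?_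
  refine Summable.of_nonneg_of_le (fun k => by positivity) (fun k => ?_) h
  rw [Real.norm_eq_abs, abs_of_pos (Real.exp_pos _)]
  gcongr
  rw [ENNReal.toReal_ofReal']
  exact max_le (le_abs_self _) (abs_nonneg _)

lemma discM_integral (c : ℕ → ℝ) (t : ℝ) :
    ∫ x, Real.exp (t * x) ∂(discM c) = ∑' k : ℕ, max (c k) 0 * Real.exp (t * k) := by
  rw [discM, integral_sum_dirac (fun _ => ENNReal.ofReal_ne_top)]
  simp [ENNReal.toReal_ofReal']

lemma binom_series (r y : ℝ) (hy : |y| < 1) :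
    (Summable fun k : ℕ => |Ring.choose r k * y ^ k|) ∧
      HasSum (fun k : ℕ => Ring.choose r k * y ^ k) ((1 + y) ^ r) := by
  have hmem : y ∈ Metric.eball (0 : ℝ) 1 := by
    rw [mem_eball_zero_iff, ← ofReal_norm, Real.norm_eq_abs]
    exact ENNReal.ofReal_lt_one.2 hy
  constructor
  · have := (binomialSeries ℝ r).summable_norm_apply
      (Metric.eball_subset_eball binomialSeries_radius_ge_one hmem)
    simpa only [binomialSeries_apply, List.ofFn_const, List.prod_replicate, smul_eq_mul, zero_add,
      Real.norm_eq_abs] using this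
  · have := Real.one_add_rpow_hasFPowerSeriesOnBall_zero (a := r) |>.hasSum hmem
    simpa only [binomialSeries_apply, List.ofFn_const, List.prod_replicate, smul_eq_mul, zero_add,
      Real.norm_eq_abs] using this

/-- If `α₁, α₂ ≥ 0`, `α₁ + α₂ = 1`, `α₁ > 1/2`, `α₂ > 0`, `r > 0`, and
`(α₁ + α₂ exp θ)^r` is the Laplace transform of a probability measure on ℝ on a neighborhood
of 0, then `r` is a natural number. -/
theorem stmt3 (α₁ α₂ r : ℝ) (hα₁0 : 0 ≤ α₁) (hα₂0 : 0 < α₂)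
    (hsum : α₁ + α₂ = 1) (hα₁ : 1 / 2 < α₁) (hr : 0 < r)
    (μ : Measure ℝ) [IsProbabilityMeasure μ] (ε : ℝ) (hε : 0 < ε)
    (hint : ∀ θ : ℝ, |θ| < ε → Integrable (fun x => Real.exp (θ * x)) μ)
    (hlap : ∀ θ : ℝ, |θ| < ε →
        (α₁ + α₂ * Real.exp θ) ^ r = ∫ x, Real.exp (θ * x) ∂μ) :
    ∃ n : ℕ, r = n := by
  by_contra hcon
  obtain ⟨k, hk⟩ := exists_choose_neg r hr hcon
  have ha : 0 < α₁ := by linarith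
  have hlt : α₂ < α₁ := by linarith
  set q := α₂ / α₁ with hq
  have hq0 : 0 < q := by positivity
  have hq1 : q < 1 := (div_lt_one ha).2 hlt
  set c : ℕ → ℝ := fun k => α₁ ^ r * (Ring.choose r k * q ^ k) with hc
  have hlog : 0 < -Real.log q := neg_pos.2 (Real.log_neg hq0 hq1)
  set δ := min ε (-Real.log q) with hδdef
  have hδ : 0 < δ := lt_min hε hlog
  have hy : ∀ t : ℝ, |t| < δ → |q * Real.exp t| < 1 := by
    intro t ht
    have h1 : t < -Real.log q := (le_abs_self t).trans_lt (ht.trans_le (min_le_right _ _))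
    rw [abs_of_pos (by positivity)]
    calc q * Real.exp t = Real.exp (Real.log q + t) := by rw [Real.exp_add, Real.exp_log hq0]
      _ < 1 := by rw [Real.exp_lt_one_iff]; linarith
  have hterm : ∀ (t : ℝ) (k : ℕ), c k * Real.exp (t * k)
      = α₁ ^ r * (Ring.choose r k * (q * Real.exp t) ^ k) := by
    intro t k
    rw [mul_comm t, Real.exp_nat_mul, mul_pow]
    simp only [hc]
    ring
  have hS : ∀ t : ℝ, |t| < δ → Summable fun k : ℕ => |c k| * Real.exp (t * k) := by
    intro t ht
    have := (binom_series r _ (hy t ht)).1.mul_left |α₁ ^ r|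
    refine this.congr fun k => ?_
    rw [← abs_mul, ← hterm, abs_mul, abs_of_pos (Real.exp_pos _)]
  have hS' : ∀ t : ℝ, |t| < δ → Summable fun k : ℕ => |(-c) k| * Real.exp (t * k) := by
    intro t ht
    simpa using hS t ht
  have hH : ∀ t : ℝ, |t| < δ →
      HasSum (fun k : ℕ => c k * Real.exp (t * k)) ((α₁ + α₂ * Real.exp t) ^ r) := by
    intro t ht
    have := (binom_series r _ (hy t ht)).2.mul_left (α₁ ^ r)
    rw [← Real.mul_rpow ha.le (by positivity)] at this
    have e : α₁ * (1 + q * Real.exp t) = α₁ + α₂ * Real.exp t := by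
      rw [hq]; field_simp
    rw [e] at this
    simpa only [hterm] using this
  have fin : ∀ d : ℕ → ℝ, Integrable (fun x => Real.exp (0 * x)) (discM d) →
      IsFiniteMeasure (discM d) := by
    intro d hd
    simp only [zero_mul, Real.exp_zero] at hd
    exact (integrable_const_iff_isFiniteMeasure one_ne_zero).1 hd
  have f1 := fin c (discM_integrable c 0 (hS 0 (by simpa using hδ)))
  have f2 := fin (-c) (discM_integrable (-c) 0 (hS' 0 (by simpa using hδ)))
  have hεδ : ∀ t : ℝ, |t| < δ → |t| < ε := fun t ht => ht.trans_le (min_le_left _ _)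
  have main : μ + discM (-c) = discM c := by
    refine ext_of_local_mgf _ _ δ hδ ?_ ?_ ?_
    · intro t ht
      exact (hint t (hεδ t ht)).add_measure (discM_integrable _ t (hS' t ht))
    · intro t ht
      exact discM_integrable _ t (hS t ht)
    · intro t ht
      rw [integral_add_measure (hint t (hεδ t ht)) (discM_integrable _ t (hS' t ht)),
        ← hlap t (hεδ t ht), discM_integral, discM_integral, ← (hH t ht).tsum_eq]
      have s2 : Summable fun k : ℕ => max ((-c) k) 0 * Real.exp (t * k) := by
        refine Summable.of_nonneg_of_le (fun k => by positivity) (fun k => ?_) (hS' t ht)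
        gcongr
        exact max_le (le_abs_self _) (abs_nonneg _)
      rw [← (hH t ht).summable.tsum_add s2]
      refine tsum_congr fun k => ?_
      rw [← add_mul]
      congr 1
      simp only [Pi.neg_apply]
      rcases le_total (c k) 0 with h | h
      · rw [max_eq_left (by linarith), max_eq_right h]; ring
      · rw [max_eq_right (by linarith), max_eq_left h]; ring
  have hck : c k < 0 := by
    refine mul_neg_of_pos_of_neg (by positivity) (mul_neg_of_neg_of_pos hk (by positivity))
  have e := congrArg (fun m : Measure ℝ => m {(k : ℝ)}) main
  simp only [Measure.add_apply, discM_singleton] at e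
  rw [ENNReal.ofReal_of_nonpos hck.le, add_eq_zero] at e
  have := ENNReal.ofReal_eq_zero.1 e.2
  simp only [Pi.neg_apply] at this
  linarith
end

section
/- Let μ be a probability measure on ℝⁿ whose Laplace transform is finite on an open set Θ containing 0, and let X, Y be independent random vectors each distributed according to μ. Then for θ ∈ Θ with 2θ ∈ Θ(μ), E[X_1 exp⟨θ, X+Y⟩] = (∂k/∂θ_1)(θ)·L(θ)² where k = log L is the cumulant function, and consequently the conditional expectation identity E[(X_1 - Y_1)² - 2A·X_1Y_1 | X + Y] = a(X_1+Y_1) + b(X_2+Y_2) + 2e (a.s., for all such pairs) for n = 2 is equivalent to the PDE ∂²k/∂θ_1² = A(∂k/∂θ_1)² + a·∂k/∂θ_1 + b·∂k/∂θ_2 + e on the corresponding open set. -/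
open MeasureTheory ProbabilityTheory

/-- Partial derivative in the first coordinate. -/
noncomputable def pd1 (g : ℝ × ℝ → ℝ) : ℝ × ℝ → ℝ :=
  fun p => deriv (fun t => g (t, p.2)) p.1

/-- Partial derivative in the second coordinate. -/
noncomputable def pd2 (g : ℝ × ℝ → ℝ) : ℝ × ℝ → ℝ :=
  fun p => deriv (fun t => g (p.1, t)) p.2


section helpers
open Filter Topology

lemma aux_complexMGF {Ω : Type*} [MeasurableSpace Ω] (m₁ m₂ : Measure Ω) (Z : Ω → ℝ) (ε : ℝ)
    (hε : 0 < ε)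
    (h1 : ∀ t ∈ Set.Ioo (-ε) ε, Integrable (fun ω => Real.exp (t * Z ω)) m₁)
    (h2 : ∀ t ∈ Set.Ioo (-ε) ε, Integrable (fun ω => Real.exp (t * Z ω)) m₂)
    (h : ∀ t ∈ Set.Ioo (-ε) ε, mgf Z m₁ t = mgf Z m₂ t) :
    complexMGF Z m₁ Complex.I = complexMGF Z m₂ Complex.I := by
  have s1 : Set.Ioo (-ε) ε ⊆ interior (integrableExpSet Z m₁) :=
    interior_maximal (fun t ht => h1 t ht) isOpen_Ioo
  have s2 : Set.Ioo (-ε) ε ⊆ interior (integrableExpSet Z m₂) :=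
    interior_maximal (fun t ht => h2 t ht) isOpen_Ioo
  have hX : AnalyticOnNhd ℂ (complexMGF Z m₁) {z | z.re ∈ Set.Ioo (-ε) ε} :=
    analyticOnNhd_complexMGF.mono fun z hz => s1 hz
  have hY : AnalyticOnNhd ℂ (complexMGF Z m₂) {z | z.re ∈ Set.Ioo (-ε) ε} :=
    analyticOnNhd_complexMGF.mono fun z hz => s2 hz
  have h0 : (0 : ℝ) ∈ Set.Ioo (-ε) ε := by simp [hε]
  refine AnalyticOnNhd.eqOn_of_preconnected_of_frequently_eq hX hY
    ((convex_Ioo (-ε) ε).linear_preimage Complex.reLm).isPreconnected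
    (z₀ := ((0 : ℝ) : ℂ)) (by simpa using h0) ?_ (by simpa using h0)
  have ht : Tendsto (fun x : ℝ => (x : ℂ)) (𝓝[≠] 0) (𝓝[≠] ((0 : ℝ) : ℂ)) := by
    refine tendsto_nhdsWithin_iff.2 ⟨?_, ?_⟩
    · exact (Complex.continuous_ofReal.tendsto 0).mono_left nhdsWithin_le_nhds
    · filter_upwards [self_mem_nhdsWithin] with x hx
      simpa using hx
  refine ht.frequently (Eventually.frequently ?_)
  filter_upwards [nhdsWithin_le_nhds (isOpen_Ioo.mem_nhds h0)] with x hx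
  rw [complexMGF_ofReal, complexMGF_ofReal, h x hx]

lemma aux_unique {Ω : Type*} [MeasurableSpace Ω] (P : Measure Ω) [IsFiniteMeasure P]
    (S : Ω → ℝ × ℝ) (hS : Measurable S) (h : Ω → ℝ) (hm : Measurable h)
    (U : Set (ℝ × ℝ)) (hU : U ∈ 𝓝 (0 : ℝ × ℝ))
    (hi : ∀ θ ∈ U, Integrable
      (fun ω => h ω * Real.exp (θ.1 * (S ω).1 + θ.2 * (S ω).2)) P)
    (hz : ∀ θ ∈ U, ∫ ω, h ω * Real.exp (θ.1 * (S ω).1 + θ.2 * (S ω).2) ∂P = 0)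
    (B : Set (ℝ × ℝ)) (hB : MeasurableSet B) : ∫ ω in S ⁻¹' B, h ω ∂P = 0 := by
  have hint : Integrable h P := by simpa using hi 0 (mem_of_mem_nhds hU)
  set d₁ : Ω → ENNReal := fun ω => ENNReal.ofReal (h ω) with hd₁
  set d₂ : Ω → ENNReal := fun ω => ENNReal.ofReal (-h ω) with hd₂
  have md₁ : Measurable d₁ := by fun_prop
  have md₂ : Measurable d₂ := by fun_prop
  set m₁ := P.withDensity d₁ with hm₁
  set m₂ := P.withDensity d₂ with hm₂
  have : IsFiniteMeasure m₁ := isFiniteMeasure_withDensity_ofReal hint.2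
  have : IsFiniteMeasure m₂ := isFiniteMeasure_withDensity_ofReal hint.neg.2
  have key : m₁.map S = m₂.map S := by
    refine Measure.ext_of_charFunDual ?_
    ext l
    have hl : ∀ x : ℝ × ℝ, l x = l (1, 0) * x.1 + l (0, 1) * x.2 := by
      intro x
      have : x = x.1 • ((1 : ℝ), (0 : ℝ)) + x.2 • ((0 : ℝ), (1 : ℝ)) := by
        ext <;> simp
      conv_lhs => rw [this]
      rw [map_add, map_smul, map_smul]
      simp [mul_comm]
    have hlm : Measurable fun ω => l (S ω) := l.continuous.measurable.comp hS
    have hc : ∀ m : Measure Ω, charFunDual (m.map S) l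
        = complexMGF (fun ω => l (S ω)) m Complex.I := by
      intro m
      rw [charFunDual_eq_charFun_map_one, Measure.map_map l.continuous.measurable hS]
      have := complexMGF_mul_I (X := fun ω => l (S ω)) (μ := m) hlm.aemeasurable 1
      simp only [Complex.ofReal_one, one_mul] at this
      exact this.symm
    rw [hc, hc]
    have hcont : Tendsto (fun t : ℝ => (t * l (1, 0), t * l (0, 1))) (𝓝 0) (𝓝 (0 : ℝ × ℝ)) := by
      have : Continuous (fun t : ℝ => (t * l (1, 0), t * l (0, 1))) := by fun_prop
      simpa using! this.tendsto 0
    obtain ⟨ε, hε, hεU⟩ := Metric.mem_nhds_iff.1 (hcont hU)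
    have hU' : ∀ t ∈ Set.Ioo (-ε) ε, (t * l (1, 0), t * l (0, 1)) ∈ U := by
      intro t ht
      refine hεU ?_
      rw [Real.ball_eq_Ioo]
      simpa using ht
    have hexp : ∀ t : ℝ, ∀ ω, Real.exp ((t * l (1, 0)) * (S ω).1 + (t * l (0, 1)) * (S ω).2)
        = Real.exp (t * l (S ω)) := by
      intro t ω
      rw [hl (S ω)]; ring_nf
    have I0 : ∀ t ∈ Set.Ioo (-ε) ε, Integrable (fun ω => h ω * Real.exp (t * l (S ω))) P := by
      intro t ht
      have := hi _ (hU' t ht)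
      simpa only [hexp] using this
    have J1 : ∀ t ∈ Set.Ioo (-ε) ε,
        Integrable (fun ω => (d₁ ω).toReal • Real.exp (t * l (S ω))) P := by
      intro t ht
      refine (I0 t ht).mono (by fun_prop) (Eventually.of_forall fun ω => ?_)
      simp only [smul_eq_mul, norm_mul]
      gcongr
      simp only [hd₁, ENNReal.toReal_ofReal', Real.norm_eq_abs]
      rw [abs_of_nonneg (le_max_right _ _)]
      exact max_le (le_abs_self _) (abs_nonneg _)
    have J2 : ∀ t ∈ Set.Ioo (-ε) ε,
        Integrable (fun ω => (d₂ ω).toReal • Real.exp (t * l (S ω))) P := by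
      intro t ht
      refine (I0 t ht).mono (by fun_prop) (Eventually.of_forall fun ω => ?_)
      simp only [smul_eq_mul, norm_mul]
      gcongr
      simp only [hd₂, ENNReal.toReal_ofReal', Real.norm_eq_abs]
      rw [abs_of_nonneg (le_max_right _ _)]
      exact max_le (neg_le_abs _) (abs_nonneg _)
    have lt1 : ∀ᵐ ω ∂P, d₁ ω < ⊤ := Eventually.of_forall fun ω => ENNReal.ofReal_lt_top
    have lt2 : ∀ᵐ ω ∂P, d₂ ω < ⊤ := Eventually.of_forall fun ω => ENNReal.ofReal_lt_top
    refine aux_complexMGF m₁ m₂ _ ε hε ?_ ?_ ?_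
    · intro t ht
      exact (integrable_withDensity_iff_integrable_smul' md₁ lt1).2 (J1 t ht)
    · intro t ht
      exact (integrable_withDensity_iff_integrable_smul' md₂ lt2).2 (J2 t ht)
    · intro t ht
      rw [mgf, mgf, hm₁, hm₂, integral_withDensity_eq_integral_toReal_smul md₁ lt1,
        integral_withDensity_eq_integral_toReal_smul md₂ lt2, ← sub_eq_zero,
        ← integral_sub (J1 t ht) (J2 t ht), ← hz _ (hU' t ht)]
      refine integral_congr_ae (Eventually.of_forall fun ω => ?_)
      simp only [hexp, smul_eq_mul, hd₁, hd₂, ENNReal.toReal_ofReal', ← sub_mul]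
      congr 1
      rcases le_total 0 (h ω) with h' | h'
      · rw [max_eq_left h', max_eq_right (by linarith)]; ring
      · rw [max_eq_right h', max_eq_left (by linarith)]; ring
  have e1 := congrArg (fun m => m B) key
  simp only [Measure.map_apply hS hB] at e1
  rw [hm₁, hm₂, withDensity_apply _ (hS hB), withDensity_apply _ (hS hB)] at e1
  rw [integral_eq_lintegral_pos_part_sub_lintegral_neg_part hint.integrableOn, e1, sub_self]

lemma aux_slice {Ω : Type*} [MeasurableSpace Ω] (μ : Measure Ω) (u v : Ω → ℝ)
    (hv : Measurable v) (t : ℝ)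
    (h : ∀ᶠ s in 𝓝 t, Integrable (fun x => Real.exp (s * u x + v x)) μ) (n : ℕ) :
    Integrable (fun x => u x ^ n * Real.exp (t * u x + v x)) μ ∧
    HasDerivAt (fun s => ∫ x, u x ^ n * Real.exp (s * u x + v x) ∂μ)
      (∫ x, u x ^ (n + 1) * Real.exp (t * u x + v x) ∂μ) t := by
  set d : Ω → ENNReal := fun x => ENNReal.ofReal (Real.exp (v x)) with hd
  have md : Measurable d := by fun_prop
  have lt : ∀ᵐ ω ∂μ, d ω < ⊤ := Eventually.of_forall fun ω => ENNReal.ofReal_lt_top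
  have hf : ∀ s (n : ℕ), (fun x => (d x).toReal • (u x ^ n * Real.exp (s * u x)))
      = fun x => u x ^ n * Real.exp (s * u x + v x) := by
    intro s n
    ext x
    simp only [hd, smul_eq_mul]
    rw [ENNReal.toReal_ofReal (Real.exp_pos _).le, Real.exp_add]
    ring
  have hmem : t ∈ interior (integrableExpSet u (μ.withDensity d)) := by
    rw [mem_interior_iff_mem_nhds]
    filter_upwards [h] with s hs
    refine (integrable_withDensity_iff_integrable_smul' md lt).2 ?_
    have := hf s 0
    simp only [pow_zero, one_mul] at this
    rw [this]
    exact hs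
  constructor
  · have := integrable_pow_mul_exp_of_mem_interior_integrableExpSet hmem n
    rw [integrable_withDensity_iff_integrable_smul' md lt, hf] at this
    exact this
  · have := hasDerivAt_integral_pow_mul_exp_real hmem n
    simp only [integral_withDensity_eq_integral_toReal_smul md lt, hf] at this
    exact this

end helpers

/-- For i.i.d. `X, Y` with law `μ` on ℝ² whose Laplace transform `L` is finite
on an open set `Θ ∋ 0`, with cumulant function `k = log L`: (i) for `θ ∈ Θ` with `2θ ∈ Θ`,
`E[X₁ exp⟨θ, X+Y⟩] = ∂k/∂θ₁(θ) · L(θ)²`; and (ii) the conditional expectation identity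
`E[(X₁-Y₁)² - 2A X₁Y₁ | X+Y] = a(X₁+Y₁) + b(X₂+Y₂) + 2e` a.s. is equivalent to the PDE
`∂²k/∂θ₁² = A(∂k/∂θ₁)² + a ∂k/∂θ₁ + b ∂k/∂θ₂ + e` on the corresponding open set. -/
theorem stmt18 {Ω : Type*} [MeasurableSpace Ω] (P : Measure Ω) [IsProbabilityMeasure P]
    (X Y : Ω → ℝ × ℝ) (hX : Measurable X) (hY : Measurable Y)
    (hindep : IndepFun X Y P)
    (μ : Measure (ℝ × ℝ)) [IsProbabilityMeasure μ]
    (hXlaw : Measure.map X P = μ) (hYlaw : Measure.map Y P = μ)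
    (Θ : Set (ℝ × ℝ)) (hΘ : IsOpen Θ) (h0 : (0 : ℝ × ℝ) ∈ Θ)
    (hint : ∀ θ ∈ Θ, Integrable (fun x : ℝ × ℝ => Real.exp (θ.1 * x.1 + θ.2 * x.2)) μ)
    (L : ℝ × ℝ → ℝ) (hL : ∀ θ, L θ = ∫ x, Real.exp (θ.1 * x.1 + θ.2 * x.2) ∂μ)
    (k : ℝ × ℝ → ℝ) (hk : ∀ θ, k θ = Real.log (L θ))
    (A a b e : ℝ) :
    (∀ θ ∈ Θ, (2 : ℝ) • θ ∈ Θ →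
        (∫ ω, (X ω).1 * Real.exp (θ.1 * ((X ω).1 + (Y ω).1)
            + θ.2 * ((X ω).2 + (Y ω).2)) ∂P) = pd1 k θ * (L θ) ^ 2) ∧
    ((P[fun ω => ((X ω).1 - (Y ω).1) ^ 2 - 2 * A * (X ω).1 * (Y ω).1
          | MeasurableSpace.comap (fun ω => X ω + Y ω) inferInstance]
        =ᵐ[P] fun ω => a * ((X ω).1 + (Y ω).1) + b * ((X ω).2 + (Y ω).2) + 2 * e)
      ↔ ∀ θ ∈ Θ, (2 : ℝ) • θ ∈ Θ →
          pd1 (pd1 k) θ = A * (pd1 k θ) ^ 2 + a * pd1 k θ + b * pd2 k θ + e) := by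
  classical
  set E : ℝ × ℝ → ℝ × ℝ → ℝ := fun θ x => Real.exp (θ.1 * x.1 + θ.2 * x.2) with hE
  set M1 : ℝ × ℝ → ℝ := fun θ => ∫ x, x.1 * E θ x ∂μ with hM1
  set M2 : ℝ × ℝ → ℝ := fun θ => ∫ x, x.2 * E θ x ∂μ with hM2
  set M11 : ℝ × ℝ → ℝ := fun θ => ∫ x, x.1 ^ 2 * E θ x ∂μ with hM11
  have ev1 : ∀ θ ∈ Θ, ∀ᶠ s in nhds θ.1, (s, θ.2) ∈ Θ := by
    intro θ hθ
    have hc : Continuous fun s : ℝ => (s, θ.2) := by fun_prop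
    exact hc.continuousAt.eventually (hΘ.mem_nhds hθ)
  have ev2 : ∀ θ ∈ Θ, ∀ᶠ s in nhds θ.2, (θ.1, s) ∈ Θ := by
    intro θ hθ
    have hc : Continuous fun s : ℝ => (θ.1, s) := by fun_prop
    exact hc.continuousAt.eventually (hΘ.mem_nhds hθ)
  have sl1 : ∀ θ ∈ Θ, ∀ n : ℕ, Integrable (fun x : ℝ × ℝ => x.1 ^ n * E θ x) μ ∧
      HasDerivAt (fun s => ∫ x, x.1 ^ n * E (s, θ.2) x ∂μ)
        (∫ x, x.1 ^ (n + 1) * E θ x ∂μ) θ.1 := by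
    intro θ hθ n
    exact aux_slice μ (fun x => x.1) (fun x => θ.2 * x.2) (by fun_prop) θ.1
      ((ev1 θ hθ).mono fun s hs => hint _ hs) n
  have sl2 : ∀ θ ∈ Θ, ∀ n : ℕ, Integrable (fun x : ℝ × ℝ => x.2 ^ n * E θ x) μ ∧
      HasDerivAt (fun s => ∫ x, x.2 ^ n * E (θ.1, s) x ∂μ)
        (∫ x, x.2 ^ (n + 1) * E θ x ∂μ) θ.2 := by
    intro θ hθ n
    have := aux_slice μ (fun x => x.2) (fun x => θ.1 * x.1) (by fun_prop) θ.2
      ((ev2 θ hθ).mono fun s hs => by simpa only [add_comm] using hint _ hs) n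
    simp only [hE, add_comm (θ.1 * _)]
    exact this
  have I0 : ∀ θ ∈ Θ, Integrable (E θ) μ := fun θ hθ => hint θ hθ
  have I1 : ∀ θ ∈ Θ, Integrable (fun x : ℝ × ℝ => x.1 * E θ x) μ := fun θ hθ => by
    simpa using (sl1 θ hθ 1).1
  have I2 : ∀ θ ∈ Θ, Integrable (fun x : ℝ × ℝ => x.2 * E θ x) μ := fun θ hθ => by
    simpa using (sl2 θ hθ 1).1
  have I11 : ∀ θ ∈ Θ, Integrable (fun x : ℝ × ℝ => x.1 ^ 2 * E θ x) μ := fun θ hθ =>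
    (sl1 θ hθ 2).1
  have hL' : ∀ θ, L θ = ∫ x, E θ x ∂μ := hL
  have Lpos : ∀ θ ∈ Θ, 0 < L θ := by
    intro θ hθ
    rw [hL]
    exact integral_exp_pos (hint θ hθ)
  have dL1 : ∀ θ ∈ Θ, HasDerivAt (fun s => L (s, θ.2)) (M1 θ) θ.1 := by
    intro θ hθ
    have := (sl1 θ hθ 0).2
    simp only [pow_zero, one_mul, zero_add, pow_one] at this
    simpa only [hL'] using this
  have dL2 : ∀ θ ∈ Θ, HasDerivAt (fun s => L (θ.1, s)) (M2 θ) θ.2 := by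
    intro θ hθ
    have := (sl2 θ hθ 0).2
    simp only [pow_zero, one_mul, zero_add, pow_one] at this
    simpa only [hL'] using this
  have dM1 : ∀ θ ∈ Θ, HasDerivAt (fun s => M1 (s, θ.2)) (M11 θ) θ.1 := by
    intro θ hθ
    have := (sl1 θ hθ 1).2
    simp only [pow_one] at this
    exact this
  have hp1 : ∀ θ ∈ Θ, pd1 k θ = M1 θ / L θ := by
    intro θ hθ
    simp only [pd1, hk]
    exact ((dL1 θ hθ).log (Lpos θ hθ).ne').deriv
  have hp2 : ∀ θ ∈ Θ, pd2 k θ = M2 θ / L θ := by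
    intro θ hθ
    simp only [pd2, hk]
    exact ((dL2 θ hθ).log (Lpos θ hθ).ne').deriv
  have hp11 : ∀ θ ∈ Θ, pd1 (pd1 k) θ = (M11 θ * L θ - M1 θ * M1 θ) / L θ ^ 2 := by
    intro θ hθ
    have hd := (dM1 θ hθ).div (dL1 θ hθ) (Lpos θ hθ).ne'
    have he : (fun s => pd1 k (s, θ.2)) =ᶠ[nhds θ.1] (fun s => M1 (s, θ.2)) / fun s => L (s, θ.2) :=
      (ev1 θ hθ).mono fun s hs => hp1 _ hs
    exact (hd.congr_of_eventuallyEq he).deriv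
  have hmap : P.map (fun ω => (X ω, Y ω)) = μ.prod μ := by
    have := (indepFun_iff_map_prod_eq_prod_map_map hX.aemeasurable hY.aemeasurable).1 hindep
    rw [this, hXlaw, hYlaw]
  have hXY : Measurable fun ω => (X ω, Y ω) := hX.prodMk hY
  have hprod : ∀ F G : ℝ × ℝ → ℝ, Integrable F μ → Integrable G μ →
      Integrable (fun ω => F (X ω) * G (Y ω)) P ∧
      ∫ ω, F (X ω) * G (Y ω) ∂P = (∫ x, F x ∂μ) * ∫ x, G x ∂μ := by
    intro F G hF hG
    have hi := hF.mul_prod hG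
    rw [← hmap] at hi
    refine ⟨hi.comp_measurable hXY, ?_⟩
    rw [← integral_prod_mul, ← hmap, integral_map hXY.aemeasurable hi.aestronglyMeasurable]
  have hEE : ∀ θ ω, Real.exp (θ.1 * ((X ω).1 + (Y ω).1) + θ.2 * ((X ω).2 + (Y ω).2))
      = E θ (X ω) * E θ (Y ω) := by
    intro θ ω
    rw [hE]
    simp only
    rw [← Real.exp_add]
    ring_nf
  set f : Ω → ℝ := fun ω => ((X ω).1 - (Y ω).1) ^ 2 - 2 * A * (X ω).1 * (Y ω).1 with hf
  set g : Ω → ℝ := fun ω => a * ((X ω).1 + (Y ω).1) + b * ((X ω).2 + (Y ω).2) + 2 * e with hg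
  have hfE : ∀ θ ∈ Θ, Integrable (fun ω => f ω * (E θ (X ω) * E θ (Y ω))) P ∧
      ∫ ω, f ω * (E θ (X ω) * E θ (Y ω)) ∂P
        = 2 * (M11 θ * L θ) - (2 + 2 * A) * (M1 θ * M1 θ) := by
    intro θ hθ
    obtain ⟨i1, e1⟩ := hprod _ _ (I11 θ hθ) (I0 θ hθ)
    obtain ⟨i2, e2⟩ := hprod _ _ (I0 θ hθ) (I11 θ hθ)
    obtain ⟨i3, e3⟩ := hprod _ _ (I1 θ hθ) (I1 θ hθ)
    have hfe : (fun ω => f ω * (E θ (X ω) * E θ (Y ω))) = fun ω =>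
        ((X ω).1 ^ 2 * E θ (X ω) * E θ (Y ω) + E θ (X ω) * ((Y ω).1 ^ 2 * E θ (Y ω)))
        - (2 + 2 * A) * (((X ω).1 * E θ (X ω)) * ((Y ω).1 * E θ (Y ω))) := by
      ext ω; simp only [hf]; ring
    rw [hfe]
    refine ⟨(i1.fun_add i2).sub (i3.const_mul _), ?_⟩
    rw [integral_sub (i1.fun_add i2) (i3.const_mul _), integral_add i1 i2, integral_const_mul,
      e1, e2, e3, ← hL' θ]
    simp only [hM11, hM1]
    ring
  have hgE : ∀ θ ∈ Θ, Integrable (fun ω => g ω * (E θ (X ω) * E θ (Y ω))) P ∧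
      ∫ ω, g ω * (E θ (X ω) * E θ (Y ω)) ∂P
        = 2 * (a * (M1 θ * L θ) + b * (M2 θ * L θ) + e * (L θ * L θ)) := by
    intro θ hθ
    obtain ⟨i1, e1⟩ := hprod _ _ (I1 θ hθ) (I0 θ hθ)
    obtain ⟨i2, e2⟩ := hprod _ _ (I0 θ hθ) (I1 θ hθ)
    obtain ⟨i3, e3⟩ := hprod _ _ (I2 θ hθ) (I0 θ hθ)
    obtain ⟨i4, e4⟩ := hprod _ _ (I0 θ hθ) (I2 θ hθ)
    obtain ⟨i5, e5⟩ := hprod _ _ (I0 θ hθ) (I0 θ hθ)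
    have hge : (fun ω => g ω * (E θ (X ω) * E θ (Y ω))) = fun ω =>
        (a * ((X ω).1 * E θ (X ω) * E θ (Y ω) + E θ (X ω) * ((Y ω).1 * E θ (Y ω)))
        + b * ((X ω).2 * E θ (X ω) * E θ (Y ω) + E θ (X ω) * ((Y ω).2 * E θ (Y ω))))
        + (2 * e) * (E θ (X ω) * E θ (Y ω)) := by
      ext ω; simp only [hg]; ring
    rw [hge]
    have j1 := (i1.fun_add i2).const_mul a
    have j2 := (i3.fun_add i4).const_mul b
    have j3 := i5.const_mul (2 * e)
    refine ⟨(j1.fun_add j2).add j3, ?_⟩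
    rw [integral_add (j1.fun_add j2) j3, integral_add j1 j2, integral_const_mul, integral_const_mul,
      integral_const_mul]

    rw [integral_add i1 i2, integral_add i3 i4,
      e1, e2, e3, e4, e5, ← hL' θ]
    ring
  have hpde : ∀ θ ∈ Θ, (pd1 (pd1 k) θ = A * (pd1 k θ) ^ 2 + a * pd1 k θ + b * pd2 k θ + e ↔
      ∫ ω, f ω * (E θ (X ω) * E θ (Y ω)) ∂P = ∫ ω, g ω * (E θ (X ω) * E θ (Y ω)) ∂P) := by
    intro θ hθ
    have hLp := (Lpos θ hθ).ne'
    rw [hp11 θ hθ, hp1 θ hθ, hp2 θ hθ, (hfE θ hθ).2, (hgE θ hθ).2]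
    have e1 : A * (M1 θ / L θ) ^ 2 + a * (M1 θ / L θ) + b * (M2 θ / L θ) + e
        = (A * M1 θ ^ 2 + a * (M1 θ * L θ) + b * (M2 θ * L θ) + e * (L θ * L θ)) / L θ ^ 2 := by
      field_simp
    rw [e1, div_left_inj' (pow_ne_zero 2 hLp)]
    constructor <;> intro h <;> linarith
  have E0 : ∀ x, E 0 x = 1 := by intro x; simp [hE]
  have hfi : Integrable f P := by simpa [E0] using (hfE 0 h0).1
  have hgi : Integrable g P := by simpa [E0] using (hgE 0 h0).1
  have hS : Measurable fun ω => X ω + Y ω := hX.add hY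
  have hmle : MeasurableSpace.comap (fun ω => X ω + Y ω) inferInstance ≤ ‹MeasurableSpace Ω› :=
    hS.comap_le
  have hSm : Measurable[MeasurableSpace.comap (fun ω => X ω + Y ω) inferInstance]
      (fun ω => X ω + Y ω) := comap_measurable _
  have hEEm : ∀ θ, StronglyMeasurable[MeasurableSpace.comap (fun ω => X ω + Y ω) inferInstance]
      (fun ω => E θ (X ω) * E θ (Y ω)) := by
    intro θ
    have h1 : Measurable fun s : ℝ × ℝ => E θ s := by simp only [hE]; fun_prop
    have h2 := (h1.comp hSm).stronglyMeasurable
    convert h2 using 2 with ω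
    rw [← hEE]
    simp [hE]
  have hgm : StronglyMeasurable[MeasurableSpace.comap (fun ω => X ω + Y ω) inferInstance] g := by
    have h1 : Measurable fun s : ℝ × ℝ => a * s.1 + b * s.2 + 2 * e := by fun_prop
    exact (h1.comp hSm).stronglyMeasurable
  refine ⟨?_, ?_, ?_⟩
  · intro θ hθ _
    have hLp := (Lpos θ hθ).ne'
    have h1 := (hprod _ _ (I1 θ hθ) (I0 θ hθ)).2
    simp only [hEE, ← mul_assoc]
    rw [h1, hp1 θ hθ, ← hL' θ]
    field_simp
    simp only [hM1]
  · intro hce θ hθ _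
    rw [hpde θ hθ]
    have h1 := condExp_mul_of_stronglyMeasurable_right (μ := P) (f := f) (hEEm θ) (hfE θ hθ).1 hfi
    have h2 := integral_congr_ae h1
    rw [integral_condExp hmle] at h2
    refine h2.trans (integral_congr_ae ?_)
    filter_upwards [hce] with ω hω
    simp only [Pi.mul_apply]
    rw [hω]
  · intro hP
    have hU : {θ : ℝ × ℝ | θ ∈ Θ ∧ (2 : ℝ) • θ ∈ Θ} ∈ nhds (0 : ℝ × ℝ) := by
      refine Filter.inter_mem (hΘ.mem_nhds h0) ?_
      have hc : Continuous fun θ : ℝ × ℝ => (2 : ℝ) • θ := by fun_prop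
      exact hc.continuousAt.preimage_mem_nhds (hΘ.mem_nhds (by simpa using h0))
    have hEE' : ∀ θ ω, Real.exp (θ.1 * (X ω + Y ω).1 + θ.2 * (X ω + Y ω).2)
      = E θ (X ω) * E θ (Y ω) := fun θ ω => hEE θ ω
    have hun := aux_unique P (fun ω => X ω + Y ω) hS (fun ω => f ω - g ω)
      (by simp only [hf, hg]; fun_prop) _ hU
      (by
        rintro θ ⟨hθ, _⟩
        simp only [hEE', sub_mul]
        exact (hfE θ hθ).1.sub (hgE θ hθ).1)
      (by
        rintro θ ⟨hθ, h2θ⟩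
        simp only [hEE', sub_mul]
        rw [integral_sub (hfE θ hθ).1 (hgE θ hθ).1, (hpde θ hθ).1 (hP θ hθ h2θ), sub_self])
    refine (ae_eq_condExp_of_forall_setIntegral_eq hmle hfi (fun s _ _ => hgi.integrableOn) ?_
      hgm.aestronglyMeasurable).symm
    rintro s ⟨B, hB, rfl⟩ _
    have h1 := hun B hB
    rw [integral_sub hfi.integrableOn hgi.integrableOn] at h1
    linarith
end
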